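/- arXiv:2106.07194 — 2 statements merged into one kernel-verified Lean document; each statement's English description precedes it below -/
import Mathlib

section
/- Let a ≤ b be real numbers, I = [a,b], and κ ≥ 0. Let F denote the set of functions φ : I → ℝ that are monotone nondecreasing, upper semicontinuous on I, and satisfy 0 ≤ φ(t) ≤ κ for all t ∈ I, equipped with the pointwise partial order. Then F is a complete lattice: F is nonempty, and every nonempty subset E of F has a greatest lower bound and a least upper bound belonging to F with respect to the pointwise order. -/
open Set

/-- Upper semicontinuity on a set, ε-δ form. -/
def USCOn (f : ℝ → ℝ) (I : Set ℝ) : Prop :=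
  ∀ t₀ ∈ I, ∀ ε > 0, ∃ δ > 0, ∀ t ∈ I, |t - t₀| < δ → f t ≤ f t₀ + ε

/-- The family of monotone nondecreasing, USC functions on `[a,b]` with values in `[0,κ]`. -/
def Fop (a b κ : ℝ) : Set (ℝ → ℝ) :=
  {φ | MonotoneOn φ (Icc a b) ∧ USCOn φ (Icc a b) ∧ ∀ t ∈ Icc a b, 0 ≤ φ t ∧ φ t ≤ κ}

theorem Fop_const (a b κ : ℝ) (hκ : 0 ≤ κ) : (fun _ => κ) ∈ Fop a b κ := by
  refine ⟨fun _ _ _ _ _ => le_refl _, fun t₀ _ ε hε => ⟨1, one_pos, fun t _ _ => ?_⟩,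
    fun t _ => ⟨hκ, le_refl _⟩⟩
  show κ ≤ κ + ε
  linarith

theorem Fop_inf (a b κ : ℝ) (E : Set (ℝ → ℝ)) (hE : E ⊆ Fop a b κ) (hne : E.Nonempty) :
    ∃ Φ ∈ Fop a b κ, (∀ φ ∈ E, ∀ t ∈ Icc a b, Φ t ≤ φ t) ∧
      ∀ ψ : ℝ → ℝ, ∀ t ∈ Icc a b, (∀ φ ∈ E, ψ t ≤ φ t) → ψ t ≤ Φ t := by
  have hlb : ∀ φ ∈ E, ∀ t ∈ Icc a b, sInf ((fun φ : ℝ → ℝ => φ t) '' E) ≤ φ t := by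
    intro φ hφ t ht
    refine csInf_le ⟨0, ?_⟩ ⟨φ, hφ, rfl⟩
    rintro _ ⟨χ, hχ, rfl⟩
    exact ((hE hχ).2.2 t ht).1
  have hglb : ∀ (c t : ℝ), (∀ φ ∈ E, c ≤ φ t) → c ≤ sInf ((fun φ : ℝ → ℝ => φ t) '' E) := by
    intro c t h
    refine le_csInf (hne.image _) ?_
    rintro _ ⟨χ, hχ, rfl⟩
    exact h χ hχ
  refine ⟨fun t => sInf ((fun φ : ℝ → ℝ => φ t) '' E), ⟨?_, ?_, ?_⟩, hlb,
    fun ψ t _ h => hglb _ t h⟩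
  · intro s hs t ht hst
    exact hglb _ t fun φ hφ => (hlb φ hφ s hs).trans ((hE hφ).1 hs ht hst)
  · intro t₀ ht₀ ε hε
    obtain ⟨_, ⟨φ, hφ, rfl⟩, hlt⟩ := exists_lt_of_csInf_lt (hne.image (fun φ : ℝ → ℝ => φ t₀))
      (lt_add_of_pos_right _ (half_pos hε))
    obtain ⟨δ, hδ, h⟩ := (hE hφ).2.1 t₀ ht₀ (ε / 2) (half_pos hε)
    refine ⟨δ, hδ, fun t ht htd => ?_⟩
    have h1 := h t ht htd
    have h2 := hlb φ hφ t ht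
    dsimp only at hlt ⊢
    linarith
  · intro t ht
    obtain ⟨φ, hφ⟩ := hne
    exact ⟨hglb 0 t fun χ hχ => ((hE hχ).2.2 t ht).1,
      (hlb φ hφ t ht).trans ((hE hφ).2.2 t ht).2⟩

theorem Fop_completeLattice (a b κ : ℝ) (hab : a ≤ b) (hκ : 0 ≤ κ) :
    (Fop a b κ).Nonempty ∧
      ∀ E ⊆ Fop a b κ, E.Nonempty →
        (∃ Φ ∈ Fop a b κ, (∀ φ ∈ E, ∀ t ∈ Icc a b, Φ t ≤ φ t) ∧
          ∀ ψ ∈ Fop a b κ, (∀ φ ∈ E, ∀ t ∈ Icc a b, ψ t ≤ φ t) →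
            ∀ t ∈ Icc a b, ψ t ≤ Φ t) ∧
        (∃ Ψ ∈ Fop a b κ, (∀ φ ∈ E, ∀ t ∈ Icc a b, φ t ≤ Ψ t) ∧
          ∀ ψ ∈ Fop a b κ, (∀ φ ∈ E, ∀ t ∈ Icc a b, φ t ≤ ψ t) →
            ∀ t ∈ Icc a b, Ψ t ≤ ψ t) := by
  refine ⟨⟨_, Fop_const a b κ hκ⟩, fun E hE hne => ⟨?_, ?_⟩⟩
  · obtain ⟨Φ, hΦ, h1, h2⟩ := Fop_inf a b κ E hE hne
    exact ⟨Φ, hΦ, h1, fun ψ _ h t ht => h2 ψ t ht fun φ hφ => h φ hφ t ht⟩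
  · obtain ⟨Φ, hΦ, h1, h2⟩ := Fop_inf a b κ
      {ψ | ψ ∈ Fop a b κ ∧ ∀ φ ∈ E, ∀ t ∈ Icc a b, φ t ≤ ψ t} (fun _ h => h.1)
      ⟨_, Fop_const a b κ hκ, fun φ hφ t ht => ((hE hφ).2.2 t ht).2⟩
    exact ⟨Φ, hΦ, fun φ hφ t ht => h2 φ t ht fun ψ hψ => hψ.2 φ hφ t ht,
      fun ψ hψ h t ht => h1 ψ ⟨hψ, h⟩ t ht⟩
end

section
/- Let a ≤ b be real numbers, I = [a,b], and κ ≥ 0. Let F denote the set of functions φ : I → ℝ that are monotone nondecreasing, lower semicontinuous on I, and satisfy 0 ≤ φ(t) ≤ κ for all t ∈ I, equipped with the pointwise partial order. Then F is a complete lattice: F is nonempty, and every nonempty subset E of F has a greatest lower bound and a least upper bound belonging to F with respect to the pointwise order. -/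
open Set

/-- Lower semicontinuity on a set, ε-δ form. -/
def LSCOn (f : ℝ → ℝ) (I : Set ℝ) : Prop :=
  ∀ t₀ ∈ I, ∀ ε > 0, ∃ δ > 0, ∀ t ∈ I, |t - t₀| < δ → f t₀ - ε ≤ f t

/-- The family of monotone nondecreasing, LSC functions on `[a,b]` with values in `[0,κ]`. -/
def FopLSC (a b κ : ℝ) : Set (ℝ → ℝ) :=
  {φ | MonotoneOn φ (Icc a b) ∧ LSCOn φ (Icc a b) ∧ ∀ t ∈ Icc a b, 0 ≤ φ t ∧ φ t ≤ κ}

theorem FopLSC_sup (a b κ : ℝ) (E : Set (ℝ → ℝ)) (hE : E ⊆ FopLSC a b κ)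
    (hne : E.Nonempty) :
    ∃ Ψ ∈ FopLSC a b κ, (∀ φ ∈ E, ∀ t ∈ Icc a b, φ t ≤ Ψ t) ∧
      ∀ ψ ∈ FopLSC a b κ, (∀ φ ∈ E, ∀ t ∈ Icc a b, φ t ≤ ψ t) →
        ∀ t ∈ Icc a b, Ψ t ≤ ψ t := by
  have hN : ∀ t, ((fun φ : ℝ → ℝ => φ t) '' E).Nonempty := fun t => hne.image _
  have hup : ∀ φ ∈ E, ∀ t ∈ Icc a b, φ t ≤ sSup ((fun φ : ℝ → ℝ => φ t) '' E) := by
    intro φ hφ t ht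
    refine le_csSup ⟨κ, ?_⟩ ⟨φ, hφ, rfl⟩
    rintro _ ⟨χ, hχ, rfl⟩
    exact ((hE hχ).2.2 t ht).2
  have hle : ∀ t c, (∀ φ ∈ E, φ t ≤ c) → sSup ((fun φ : ℝ → ℝ => φ t) '' E) ≤ c := by
    intro t c h
    refine csSup_le (hN t) ?_
    rintro _ ⟨χ, hχ, rfl⟩
    exact h χ hχ
  refine ⟨fun t => sSup ((fun φ : ℝ → ℝ => φ t) '' E), ⟨?_, ?_, ?_⟩, hup, ?_⟩
  · intro s hs t ht hst
    exact hle s _ fun φ hφ => ((hE hφ).1 hs ht hst).trans (hup φ hφ t ht)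
  · intro t₀ ht₀ ε hε
    obtain ⟨_, ⟨φ, hφ, rfl⟩, h⟩ := exists_lt_of_lt_csSup (hN t₀)
      (sub_lt_self (sSup ((fun φ : ℝ → ℝ => φ t₀) '' E)) (half_pos hε))
    obtain ⟨δ, hδ, H⟩ := (hE hφ).2.1 t₀ ht₀ (ε / 2) (half_pos hε)
    refine ⟨δ, hδ, fun t ht htd => ?_⟩
    have h1 := H t ht htd
    have h2 := hup φ hφ t ht
    dsimp only at h h2 ⊢
    linarith
  · intro t ht
    obtain ⟨φ, hφ⟩ := hne
    exact ⟨((hE hφ).2.2 t ht).1.trans (hup φ hφ t ht),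
      hle t κ fun χ hχ => ((hE hχ).2.2 t ht).2⟩
  · intro ψ _ h t ht
    exact hle t _ fun φ hφ => h φ hφ t ht

theorem FopLSC_completeLattice (a b κ : ℝ) (hab : a ≤ b) (hκ : 0 ≤ κ) :
    (FopLSC a b κ).Nonempty ∧
      ∀ E ⊆ FopLSC a b κ, E.Nonempty →
        (∃ Φ ∈ FopLSC a b κ, (∀ φ ∈ E, ∀ t ∈ Icc a b, Φ t ≤ φ t) ∧
          ∀ ψ ∈ FopLSC a b κ, (∀ φ ∈ E, ∀ t ∈ Icc a b, ψ t ≤ φ t) →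
            ∀ t ∈ Icc a b, ψ t ≤ Φ t) ∧
        (∃ Ψ ∈ FopLSC a b κ, (∀ φ ∈ E, ∀ t ∈ Icc a b, φ t ≤ Ψ t) ∧
          ∀ ψ ∈ FopLSC a b κ, (∀ φ ∈ E, ∀ t ∈ Icc a b, φ t ≤ ψ t) →
            ∀ t ∈ Icc a b, Ψ t ≤ ψ t) := by
  have h0 : (fun _ => 0 : ℝ → ℝ) ∈ FopLSC a b κ := by
    refine ⟨fun _ _ _ _ _ => le_rfl, fun t₀ _ ε hε => ⟨1, one_pos, fun t _ _ => ?_⟩,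
      fun t _ => ⟨le_rfl, hκ⟩⟩
    dsimp only
    linarith
  refine ⟨⟨_, h0⟩, fun E hE hne => ⟨?_, FopLSC_sup a b κ E hE hne⟩⟩
  obtain ⟨Φ, hΦ, h1, h2⟩ := FopLSC_sup a b κ
    {ψ | ψ ∈ FopLSC a b κ ∧ ∀ φ ∈ E, ∀ t ∈ Icc a b, ψ t ≤ φ t} (fun _ h => h.1)
    ⟨_, h0, fun φ hφ t ht => ((hE hφ).2.2 t ht).1⟩
  exact ⟨Φ, hΦ, fun φ hφ => h2 φ (hE hφ) fun ψ hψ => hψ.2 φ hφ,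
    fun ψ hψ h => h1 ψ ⟨hψ, h⟩⟩
end
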